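/- Let n ≥ 2 and let K, T ⊆ ℝⁿ be convex bodies. Then vol((∂K + ∂T)/2) = √(vol(K)·vol(T)) holds if and only if either T is a translate of K, or n = 2 and K and T are homothetic to each other (i.e., T = x + rK for some x ∈ ℝ² and r > 0) and K is centrally symmetric up to translation (i.e., −K is a translate of K). -/

import Mathlib

open MeasureTheory Pointwise

/-!
Write `k` and `t` for the `d`-th roots of the volumes of `K` and `T`, with `t ≤ k`. A point
`z ∈ K + T` outside `∂K + ∂T` makes `K` and `z - T` meeting bodies with disjoint boundaries, so,
as `∂K` is connected for `d ≥ 2`, one contains the other; by volume it is `z - T ⊆ K`. Hence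
`∂K + ∂T` is, up to a null set, `K + T` minus the Minkowski difference `K ⊖ (-T)`. The
Brunn–Minkowski inequality bounds the first volume below by `(k + t) ^ d` and the second above by
`(k - t) ^ d`, and `(2 √(k t)) ^ 2 + (k - t) ^ 2 = (k + t) ^ 2` gives
`(k + t) ^ d - (k - t) ^ d ≥ (2 √(k t)) ^ d`. The equality cases are those of Brunn–Minkowski
together with `d = 2` or `k = t`.

For the equality case of Brunn–Minkowski, normalize both volumes to `1`. Prékopa–Leindler makes the
distribution functions of the one-dimensional marginals of the uniform measures log-concave, so
their quantile functions are convex functions of the logarithm of the level. Equality forces these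
quantile functions to differ by a constant, that is, the marginals are translates of each other,
and Cramér–Wold turns this into a translation of the bodies.
-/

open Filter Module ProbabilityTheory Set Topology
open scoped ENNReal

section PrekopaLeindlerReal

lemma volume_add_volume_le_of_isCompact {A B : Set ℝ} (hA : IsCompact A) (hB : IsCompact B)
    (hA' : A.Nonempty) (hB' : B.Nonempty) : volume A + volume B ≤ volume (A + B) := by
  obtain ⟨a, haA, ha⟩ := hA.exists_isGreatest hA'
  obtain ⟨b, hbB, hb⟩ := hB.exists_isLeast hB'
  have hsub : (b +ᵥ A) ∪ (a +ᵥ B) ⊆ A + B := by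
    rintro _ (⟨x, hx, rfl⟩ | ⟨x, hx, rfl⟩)
    · exact ⟨x, hx, b, hbB, add_comm x b⟩
    · exact ⟨a, haA, x, hx, rfl⟩
  have hinter : volume ((b +ᵥ A) ∩ (a +ᵥ B)) = 0 := by
    refine measure_mono_null ?_ (measure_singleton (a + b))
    rintro _ ⟨⟨x, hx, rfl⟩, ⟨y, hy, hxy⟩⟩
    have hxa := ha hx
    have hby := hb hy
    simp only [vadd_eq_add, mem_singleton_iff] at hxy ⊢
    linarith
  calc volume A + volume B = volume (b +ᵥ A) + volume (a +ᵥ B) := by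
        rw [measure_vadd, measure_vadd]
    _ = volume ((b +ᵥ A) ∪ (a +ᵥ B)) := by
        rw [← measure_union_add_inter _ (hB.vadd a).measurableSet, hinter, add_zero]
    _ ≤ volume (A + B) := measure_mono hsub

lemma volume_add_volume_le {A B : Set ℝ} (hA : MeasurableSet A) (hB : MeasurableSet B)
    (hA' : A.Nonempty) (hB' : B.Nonempty) : volume A + volume B ≤ volume (A + B) := by
  obtain ⟨a, ha⟩ := hA'
  obtain ⟨b, hb⟩ := hB'
  rw [hA.measure_eq_iSup_isCompact, hB.measure_eq_iSup_isCompact]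
  simp only [iSup_and']
  refine ENNReal.biSup_add_biSup_le' (p := fun S : Set ℝ => S ⊆ A ∧ IsCompact S)
    (q := fun S : Set ℝ => S ⊆ B ∧ IsCompact S) ⟨∅, empty_subset _, isCompact_empty⟩
    ⟨∅, empty_subset _, isCompact_empty⟩ ?_
  intro S ⟨hSA, hS⟩ U ⟨hUB, hU⟩
  calc volume S + volume U ≤ volume (insert a S) + volume (insert b U) := by
        gcongr <;> exact subset_insert _ _
    _ ≤ volume (insert a S + insert b U) :=
        volume_add_volume_le_of_isCompact (hS.insert a) (hU.insert b)
          (insert_nonempty _ _) (insert_nonempty _ _)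
    _ ≤ volume (A + B) :=
        measure_mono (add_subset_add (insert_subset ha hSA) (insert_subset hb hUB))

lemma lintegral_eq_lintegral_Ioi_measure_lt {α : Type*} [MeasurableSpace α] (μ : Measure α)
    {f : α → ℝ≥0∞} (hf : Measurable f) (hfin : ∀ x, f x ≠ ∞) :
    ∫⁻ x, f x ∂μ = ∫⁻ t in Ioi (0 : ℝ), μ {x | ENNReal.ofReal t < f x} := by
  have h := lintegral_eq_lintegral_meas_lt μ (f := fun x => (f x).toReal)
    (Eventually.of_forall fun x => ENNReal.toReal_nonneg) hf.ennreal_toReal.aemeasurable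
  simp only [ENNReal.ofReal_toReal (hfin _)] at h
  rw [h]
  refine setLIntegral_congr_fun measurableSet_Ioi fun t ht => ?_
  simp only [ENNReal.ofReal_lt_iff_lt_toReal (le_of_lt ht) (hfin _)]

lemma lintegral_eq_iSup_lintegral_min {α : Type*} [MeasurableSpace α] (μ : Measure α)
    {f : α → ℝ≥0∞} (hf : Measurable f) :
    ∫⁻ x, f x ∂μ = ⨆ N : ℕ, ∫⁻ x, min (f x) N ∂μ := by
  rw [← lintegral_iSup (fun N => hf.min measurable_const)
    (fun N M h x => min_le_min_left _ (by exact_mod_cast h))]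
  congr with x
  refine le_antisymm (le_of_forall_lt fun c hc => ?_) (iSup_le fun N => min_le_left _ _)
  obtain ⟨N, hN⟩ := ENNReal.exists_nat_gt hc.ne_top
  exact lt_iSup_iff.2 ⟨N, lt_min hc hN⟩

variable {a b : ℝ}

lemma rpow_mul_rpow_le_ofReal_mul_add (ha : 0 < a) (hb : 0 < b) (hab : a + b = 1) (x y : ℝ≥0∞) :
    x ^ a * y ^ b ≤ ENNReal.ofReal a * x + ENNReal.ofReal b * y := by
  by_cases hx : x = ∞
  · simp [hx, ha, ENNReal.mul_top]
  by_cases hy : y = ∞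
  · simp [hy, hb, ENNReal.mul_top]
  lift x to NNReal using hx
  lift y to NNReal using hy
  have h := NNReal.geom_mean_le_arith_mean2_weighted a.toNNReal b.toNNReal x y (by
    rw [← Real.toNNReal_add ha.le hb.le, hab, Real.toNNReal_one])
  rw [Real.coe_toNNReal _ ha.le, Real.coe_toNNReal _ hb.le] at h
  rw [ENNReal.ofReal, ENNReal.ofReal, ← ENNReal.coe_rpow_of_nonneg _ ha.le,
    ← ENNReal.coe_rpow_of_nonneg _ hb.le]
  exact_mod_cast h

variable {f g h : ℝ → ℝ≥0∞}

lemma volume_superlevel_add_le (ha : 0 < a) (hb : 0 < b) (hab : a + b = 1)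
    (hf : Measurable f) (hg : Measurable g)
    (hfgh : ∀ x y, f x ^ a * g y ^ b ≤ h (a * x + b * y)) {s : ℝ≥0∞} (hs : s ≠ 0)
    (hfs : ∃ x, s < f x) (hgs : ∃ y, s < g y) :
    ENNReal.ofReal a * volume {x | s < f x} + ENNReal.ofReal b * volume {x | s < g x} ≤
      volume {x | s < h x} := by
  have hmf : MeasurableSet {x | s < f x} := measurableSet_lt measurable_const hf
  have hmg : MeasurableSet {x | s < g x} := measurableSet_lt measurable_const hg
  have hBM := volume_add_volume_le (hmf.const_smul_of_ne_zero ha.ne')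
    (hmg.const_smul_of_ne_zero hb.ne') (Nonempty.smul_set hfs) (Nonempty.smul_set hgs)
  simp only [Measure.addHaar_smul, finrank_self, pow_one, abs_of_pos ha, abs_of_pos hb] at hBM
  refine hBM.trans (measure_mono ?_)
  rintro _ ⟨_, ⟨x, hx, rfl⟩, _, ⟨y, hy, rfl⟩, rfl⟩
  calc s = s ^ a * s ^ b := by
        rw [← ENNReal.rpow_add _ _ hs (hx.ne_top), hab, ENNReal.rpow_one]
    _ < f x ^ a * g y ^ b :=
        ENNReal.mul_lt_mul (ENNReal.rpow_lt_rpow hx ha) (ENNReal.rpow_lt_rpow hy hb)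
    _ ≤ h (a * x + b * y) := hfgh x y

lemma arith_mean_lintegral_le_of_iSup_eq_one (ha : 0 < a) (hb : 0 < b) (hab : a + b = 1)
    (hf : Measurable f) (hg : Measurable g) (hh : Measurable h)
    (hf1 : ⨆ x, f x = 1) (hg1 : ⨆ x, g x = 1)
    (hfgh : ∀ x y, f x ^ a * g y ^ b ≤ h (a * x + b * y)) :
    ENNReal.ofReal a * (∫⁻ x, f x) + ENNReal.ofReal b * (∫⁻ x, g x) ≤ ∫⁻ x, h x := by
  have hf_le (x : ℝ) : f x ≤ 1 := hf1 ▸ le_iSup f x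
  have hg_le (x : ℝ) : g x ≤ 1 := hg1 ▸ le_iSup g x
  have level (t : ℝ) (ht : t ∈ Ioi (0 : ℝ)) :
      ENNReal.ofReal a * volume {x | ENNReal.ofReal t < f x} +
        ENNReal.ofReal b * volume {x | ENNReal.ofReal t < g x} ≤
      volume {x | ENNReal.ofReal t < min (h x) 1} := by
    rcases lt_or_ge (ENNReal.ofReal t) 1 with ht1 | ht1
    · simp only [lt_min_iff, ht1, and_true]
      exact volume_superlevel_add_le ha hb hab hf hg hfgh (by simpa using ht)
        (lt_iSup_iff.1 (hf1 ▸ ht1)) (lt_iSup_iff.1 (hg1 ▸ ht1))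
    · have hf0 (x : ℝ) : ¬ ENNReal.ofReal t < f x := ((hf_le x).trans ht1).not_gt
      have hg0 (x : ℝ) : ¬ ENNReal.ofReal t < g x := ((hg_le x).trans ht1).not_gt
      simp [hf0, hg0]
  have hmeas (k : ℝ → ℝ≥0∞) : Measurable fun t : ℝ => volume {x | ENNReal.ofReal t < k x} :=
    Antitone.measurable fun t s hts => measure_mono fun x hx =>
      (ENNReal.ofReal_le_ofReal hts).trans_lt hx
  have hfin {k : ℝ → ℝ≥0∞} (hk : ∀ x, k x ≤ 1) (x : ℝ) : k x ≠ ∞ :=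
    ne_top_of_le_ne_top ENNReal.one_ne_top (hk x)
  calc ENNReal.ofReal a * (∫⁻ x, f x) + ENNReal.ofReal b * (∫⁻ x, g x)
      = ∫⁻ t in Ioi (0 : ℝ), (ENNReal.ofReal a * volume {x | ENNReal.ofReal t < f x} +
          ENNReal.ofReal b * volume {x | ENNReal.ofReal t < g x}) := by
        rw [lintegral_add_left ((hmeas f).const_mul _), lintegral_const_mul _ (hmeas f),
          lintegral_const_mul _ (hmeas g), lintegral_eq_lintegral_Ioi_measure_lt _ hf (hfin hf_le),
          lintegral_eq_lintegral_Ioi_measure_lt _ hg (hfin hg_le)]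
    _ ≤ ∫⁻ t in Ioi (0 : ℝ), volume {x | ENNReal.ofReal t < min (h x) 1} :=
        setLIntegral_mono' measurableSet_Ioi level
    _ = ∫⁻ x, min (h x) 1 := (lintegral_eq_lintegral_Ioi_measure_lt _ (hh.min measurable_const)
        (hfin fun x => min_le_right _ _)).symm
    _ ≤ ∫⁻ x, h x := lintegral_mono fun x => min_le_left _ _

lemma prekopaLeindler_real_of_iSup_ne_top (ha : 0 < a) (hb : 0 < b) (hab : a + b = 1)
    (hf : Measurable f) (hg : Measurable g) (hh : Measurable h)
    (hftop : ⨆ x, f x ≠ ∞) (hgtop : ⨆ x, g x ≠ ∞)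
    (hfgh : ∀ x y, f x ^ a * g y ^ b ≤ h (a * x + b * y)) :
    (∫⁻ x, f x) ^ a * (∫⁻ x, g x) ^ b ≤ ∫⁻ x, h x := by
  rcases eq_or_ne (⨆ x, f x) 0 with hf0 | hf0
  · simp [ENNReal.iSup_eq_zero.1 hf0, ha]
  rcases eq_or_ne (⨆ x, g x) 0 with hg0 | hg0
  · simp [ENNReal.iSup_eq_zero.1 hg0, hb]
  set p := ⨆ x, f x
  set q := ⨆ x, g x
  set r := p ^ a * q ^ b with hr
  have hpa0 : p ^ a ≠ 0 := by simp [hf0, hftop]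
  have hpat : p ^ a ≠ ∞ := ENNReal.rpow_ne_top_of_nonneg ha.le hftop
  have hqb0 : q ^ b ≠ 0 := by simp [hg0, hgtop]
  have hqbt : q ^ b ≠ ∞ := ENNReal.rpow_ne_top_of_nonneg hb.le hgtop
  have hr0 : r ≠ 0 := mul_ne_zero hpa0 hqb0
  have hrt : r ≠ ∞ := ENNReal.mul_ne_top hpat hqbt
  have hdiv (u v : ℝ≥0∞) : (u / p) ^ a * (v / q) ^ b = u ^ a * v ^ b / r := by
    rw [ENNReal.div_rpow_of_nonneg _ _ ha.le, ENNReal.div_rpow_of_nonneg _ _ hb.le, hr,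
      div_eq_mul_inv, div_eq_mul_inv, div_eq_mul_inv, ENNReal.mul_inv (.inl hpa0) (.inl hpat)]
    ring
  have hnormalized := arith_mean_lintegral_le_of_iSup_eq_one ha hb hab (hf.div_const p)
    (hg.div_const q) (hh.div_const r)
    (by rw [← ENNReal.iSup_div, ENNReal.div_self hf0 hftop])
    (by rw [← ENNReal.iSup_div, ENNReal.div_self hg0 hgtop])
    (fun x y => (hdiv _ _).trans_le (ENNReal.div_le_div_right (hfgh x y) r))
  have hmean := (rpow_mul_rpow_le_ofReal_mul_add ha hb hab _ _).trans hnormalized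
  simp only [div_eq_mul_inv] at hmean
  rw [lintegral_mul_const _ hf, lintegral_mul_const _ hg, lintegral_mul_const _ hh] at hmean
  simp only [← div_eq_mul_inv] at hmean
  rwa [hdiv, ENNReal.div_le_iff_le_mul (.inl hr0) (.inl hrt), ENNReal.div_mul_cancel hr0 hrt]
    at hmean

end PrekopaLeindlerReal

/-- The Prékopa–Leindler inequality for the measure `μ`. The sup-convolution of `f` and `g` need
not be measurable, so it is replaced by a measurable majorant `h`. -/
def PrekopaLeindler {E : Type*} [AddCommGroup E] [Module ℝ E] [MeasurableSpace E]
    (μ : Measure E) : Prop :=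
  ∀ ⦃a b : ℝ⦄, 0 < a → 0 < b → a + b = 1 → ∀ ⦃f g h : E → ℝ≥0∞⦄,
    Measurable f → Measurable g → Measurable h →
    (∀ x y, f x ^ a * g y ^ b ≤ h (a • x + b • y)) →
    (∫⁻ x, f x ∂μ) ^ a * (∫⁻ x, g x ∂μ) ^ b ≤ ∫⁻ x, h x ∂μ

lemma prekopaLeindler_real : PrekopaLeindler (volume : Measure ℝ) := by
  intro a b ha hb hab f g h hf hg hh hfgh
  have hsup_f := (ENNReal.orderIsoRpow a ha).map_iSup fun N : ℕ => ∫⁻ x, min (f x) N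
  have hsup_g := (ENNReal.orderIsoRpow b hb).map_iSup fun N : ℕ => ∫⁻ x, min (g x) N
  simp only [ENNReal.orderIsoRpow_apply] at hsup_f hsup_g
  have htop (k : ℝ → ℝ≥0∞) (N : ℕ) : ⨆ x, min (k x) N ≠ ∞ :=
    ne_top_of_le_ne_top (ENNReal.natCast_ne_top N) (iSup_le fun x => min_le_right _ _)
  rw [lintegral_eq_iSup_lintegral_min _ hf, lintegral_eq_iSup_lintegral_min _ hg, hsup_f, hsup_g,
    ENNReal.iSup_mul]
  refine iSup_le fun N => ?_
  rw [ENNReal.mul_iSup]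
  refine iSup_le fun M => prekopaLeindler_real_of_iSup_ne_top ha hb hab (hf.min measurable_const)
    (hg.min measurable_const) hh (htop f N) (htop g M) fun x y => le_trans ?_ (hfgh x y)
  gcongr <;> exact min_le_left _ _

namespace PrekopaLeindler

variable {E F : Type*} [MeasurableSpace E] [MeasurableSpace F]

section Module

variable [AddCommGroup E] [Module ℝ E] [AddCommGroup F] [Module ℝ F]

lemma dirac_zero : PrekopaLeindler (Measure.dirac (0 : E)) := by
  intro a b _ _ _ f g h hf hg hh hfgh
  simpa [lintegral_dirac' _ hf, lintegral_dirac' _ hg, lintegral_dirac' _ hh] using hfgh 0 0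

lemma prod {μ : Measure E} {ν : Measure F} [SFinite ν] (hμ : PrekopaLeindler μ)
    (hν : PrekopaLeindler ν) : PrekopaLeindler (μ.prod ν) := by
  intro a b ha hb hab f g h hf hg hh hfgh
  rw [lintegral_prod _ hf.aemeasurable, lintegral_prod _ hg.aemeasurable,
    lintegral_prod _ hh.aemeasurable]
  exact hμ ha hb hab hf.lintegral_prod_right' hg.lintegral_prod_right' hh.lintegral_prod_right'
    fun x₁ x₂ => hν ha hb hab (hf.comp measurable_prodMk_left) (hg.comp measurable_prodMk_left)
      (hh.comp measurable_prodMk_left) fun y₁ y₂ => hfgh (x₁, y₁) (x₂, y₂)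

lemma smul {μ : Measure E} (hμ : PrekopaLeindler μ) (c : ℝ≥0∞) : PrekopaLeindler (c • μ) := by
  intro a b ha hb hab f g h hf hg hh hfgh
  simp only [lintegral_smul_measure, smul_eq_mul]
  calc (c * ∫⁻ x, f x ∂μ) ^ a * (c * ∫⁻ x, g x ∂μ) ^ b
      = c ^ (a + b) * ((∫⁻ x, f x ∂μ) ^ a * (∫⁻ x, g x ∂μ) ^ b) := by
        rw [ENNReal.mul_rpow_of_nonneg _ _ ha.le, ENNReal.mul_rpow_of_nonneg _ _ hb.le,
          ENNReal.rpow_add_of_nonneg _ _ ha.le hb.le]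
        ring
    _ ≤ c * ∫⁻ x, h x ∂μ := by
        rw [hab, ENNReal.rpow_one]
        gcongr
        exact hμ ha hb hab hf hg hh hfgh

lemma map {μ : Measure E} (hμ : PrekopaLeindler μ) {L : E →ₗ[ℝ] F} (hL : Measurable L) :
    PrekopaLeindler (μ.map L) := by
  intro a b ha hb hab f g h hf hg hh hfgh
  rw [lintegral_map hf hL, lintegral_map hg hL, lintegral_map hh hL]
  exact hμ ha hb hab (hf.comp hL) (hg.comp hL) (hh.comp hL) fun x y => by
    simpa only [Function.comp_apply, map_add, map_smul] using hfgh (L x) (L y)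

end Module

variable [NormedAddCommGroup E] [NormedSpace ℝ E] [FiniteDimensional ℝ E] [BorelSpace E]
  [NormedAddCommGroup F] [NormedSpace ℝ F] [FiniteDimensional ℝ F] [BorelSpace F]

lemma of_finrank_eq {μ : Measure E} {ν : Measure F} [μ.IsAddHaarMeasure] [ν.IsAddHaarMeasure]
    (hμ : PrekopaLeindler μ) (h : finrank ℝ E = finrank ℝ F) : PrekopaLeindler ν := by
  let e : E ≃L[ℝ] F := ContinuousLinearEquiv.ofFinrankEq h
  rw [Measure.isAddLeftInvariant_eq_smul ν (μ.map e)]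
  exact (hμ.map (L := e.toLinearEquiv.toLinearMap) e.continuous.measurable).smul _

lemma volume_pi (n : ℕ) : PrekopaLeindler (volume : Measure (Fin n → ℝ)) := by
  induction n with
  | zero => exact Measure.volume_pi_eq_dirac (0 : Fin 0 → ℝ) ▸ dirac_zero
  | succ n ih =>
    refine (prekopaLeindler_real.prod ih).of_finrank_eq ?_
    simp [finrank_prod, add_comm]

end PrekopaLeindler

theorem prekopaLeindler {E : Type*} [NormedAddCommGroup E] [NormedSpace ℝ E]
    [FiniteDimensional ℝ E] [MeasurableSpace E] [BorelSpace E]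
    (μ : Measure E) [μ.IsAddHaarMeasure] : PrekopaLeindler μ :=
  (PrekopaLeindler.volume_pi (finrank ℝ E)).of_finrank_eq (finrank_fin_fun ℝ)

section LogConcaveDistribution

/-- Log-concavity of a nonnegative function on `ℝ`, in multiplicative form because the functions
of interest, distribution functions, may vanish. -/
def LogConcave (F : ℝ → ℝ) : Prop :=
  ∀ ⦃a b : ℝ⦄, 0 < a → 0 < b → a + b = 1 → ∀ x y, F x ^ a * F y ^ b ≤ F (a * x + b * y)

lemma LogConcave.le_of_map_le {F : ℝ → ℝ} (hF : LogConcave F) (hmono : Monotone F) {p q z : ℝ}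
    (hq : 0 < F q) (hqz : F q < F z) (hqp : F q ≤ F p) : q ≤ p := by
  by_contra! hpq
  have hFp : F p = F q := (hmono hpq.le).antisymm hqp
  have hlt : q < z := hmono.reflect_lt hqz
  have hzp : 0 < z - p := by linarith
  have ha : 0 < (z - q) / (z - p) := div_pos (by linarith) hzp
  have hb : 0 < (q - p) / (z - p) := div_pos (by linarith) hzp
  have hab : (z - q) / (z - p) + (q - p) / (z - p) = 1 := by field_simp; ring
  have hcomb : (z - q) / (z - p) * p + (q - p) / (z - p) * z = q := by field_simp; ring
  have hconc := hF ha hb hab p z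
  rw [hcomb, hFp] at hconc
  refine hconc.not_gt ?_
  calc F q = F q ^ ((z - q) / (z - p)) * F q ^ ((q - p) / (z - p)) := by
        rw [← Real.rpow_add hq, hab, Real.rpow_one]
    _ < F q ^ ((z - q) / (z - p)) * F z ^ ((q - p) / (z - p)) := by gcongr

lemma exp_rpow_mul_exp_rpow (a b s t : ℝ) :
    Real.exp s ^ a * Real.exp t ^ b = Real.exp (a * s + b * t) := by
  rw [← Real.exp_mul, ← Real.exp_mul, ← Real.exp_add]
  ring_nf

section Quantile

variable {ν : Measure ℝ}

lemma le_of_cdf_eq_exp (hF : LogConcave (cdf ν)) {p q s : ℝ} (hs : s < 0)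
    (hq : cdf ν q = Real.exp s) (hp : Real.exp s ≤ cdf ν p) : q ≤ p := by
  obtain ⟨z, hz⟩ := ((tendsto_cdf_atTop ν).eventually_const_lt (Real.exp_lt_one_iff.2 hs)).exists
  rw [← hq] at hz hp
  exact hF.le_of_map_le (monotone_cdf ν) (hq ▸ Real.exp_pos s) hz hp

lemma continuous_cdf (ν : Measure ℝ) [IsProbabilityMeasure ν] [NullSingletonClass ν] :
    Continuous (cdf ν) := by
  refine continuous_iff_continuousAt.2 fun x => ?_
  have hatom := (cdf ν).measure_singleton x
  rw [measure_cdf, measure_singleton, eq_comm, ENNReal.ofReal_eq_zero, sub_nonpos] at hatom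
  exact (monotone_cdf ν).continuousAt_iff_leftLim_eq_rightLim.2
    (((monotone_cdf ν).leftLim_le_rightLim le_rfl).antisymm (by rwa [(cdf ν).rightLim_eq]))

lemma exists_quantile (ν : Measure ℝ) [IsProbabilityMeasure ν] [NullSingletonClass ν] :
    ∃ X : ℝ → ℝ, ∀ s < 0, cdf ν (X s) = Real.exp s := by
  have hrange (s : ℝ) (hs : s < 0) : ∃ x, cdf ν x = Real.exp s :=
    mem_range_of_exists_le_of_exists_ge (continuous_cdf ν)
      ((tendsto_cdf_atBot ν).eventually_le_const (Real.exp_pos s)).exists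
      ((tendsto_cdf_atTop ν).eventually_const_le (Real.exp_lt_one_iff.2 hs)).exists
  choose! X hX using hrange
  exact ⟨X, hX⟩

lemma convexOn_quantile (hF : LogConcave (cdf ν)) {X : ℝ → ℝ}
    (hX : ∀ s < 0, cdf ν (X s) = Real.exp s) : ConvexOn ℝ (Iio 0) X := by
  refine convexOn_iff_forall_pos.2 ⟨convex_Iio 0, fun s hs t ht a b ha hb hab => ?_⟩
  have hst : a * s + b * t < 0 := convex_Iio (0 : ℝ) hs ht ha.le hb.le hab
  refine le_of_cdf_eq_exp hF hst (hX _ hst) ?_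
  rw [← exp_rpow_mul_exp_rpow, ← hX s hs, ← hX t ht]
  exact hF ha hb hab (X s) (X t)

end Quantile

section InfConvolution

lemma nonneg_of_hasDerivWithinAt_of_forall_le {f : ℝ → ℝ} {c t u : ℝ} (htu : t < u)
    (hf : HasDerivWithinAt f c (Ioi t) t) (h : ∀ s ∈ Ioo t u, f t ≤ f s) : 0 ≤ c := by
  rw [hasDerivWithinAt_iff_tendsto_slope' self_notMem_Ioi] at hf
  refine ge_of_tendsto hf ?_
  filter_upwards [Ioo_mem_nhdsGT htu] with s hs
  rw [slope_def_field]
  exact div_nonneg (sub_nonneg.2 (h s hs)) (sub_nonneg.2 hs.1.le)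

variable {a b : ℝ} {X Y : ℝ → ℝ}

-- Differentiate the inequality in `s` at `s = t`, where it is an equality.
lemma rightDeriv_le_rightDeriv_of_infConvolution (ha : 0 < a) (hb : 0 < b) (hab : a + b = 1)
    {t u p q : ℝ} (htu : t < u)
    (hX : HasDerivWithinAt X p (Ioi t) t) (hY : HasDerivWithinAt Y q (Ioi t) t)
    (h : ∀ s ∈ Ioo t u, a * X (a * s + b * t) + b * Y (a * s + b * t) ≤ a * X s + b * Y t) :
    q ≤ p := by
  have htt : a * t + b * t = t := by rw [← add_mul, hab, one_mul]
  have hlin : HasDerivWithinAt (fun s => a * s + b * t) a (Ioi t) t := by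
    simpa using ((hasDerivWithinAt_id t (Ioi t)).const_mul a).add_const (b * t)
  have hmaps : MapsTo (fun s => a * s + b * t) (Ioi t) (Ioi t) := fun s hs => by
    have := mul_lt_mul_of_pos_left (mem_Ioi.1 hs) ha
    rw [mem_Ioi]
    linarith
  have hX' : HasDerivWithinAt (fun s => X (a * s + b * t)) (p * a) (Ioi t) t :=
    HasDerivWithinAt.comp t (h₂ := X) (by rwa [htt]) hlin hmaps
  have hY' : HasDerivWithinAt (fun s => Y (a * s + b * t)) (q * a) (Ioi t) t :=
    HasDerivWithinAt.comp t (h₂ := Y) (by rwa [htt]) hlin hmaps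
  have hderiv :=
    ((hX.const_mul a).add_const (b * Y t)).sub ((hX'.const_mul a).add (hY'.const_mul b))
  have hnonneg := nonneg_of_hasDerivWithinAt_of_forall_le htu hderiv fun s hs => by
    have := h s hs
    simp only [Pi.add_apply, Pi.sub_apply, htt]
    linarith
  have hprod : 0 ≤ a * b * (p - q) := by
    obtain rfl : b = 1 - a := by linarith
    linarith
  exact sub_nonneg.1 (nonneg_of_mul_nonneg_right hprod (mul_pos ha hb))

lemma exists_forall_eq_add_of_infConvolution (ha : 0 < a) (hb : 0 < b) (hab : a + b = 1)
    (hX : ConvexOn ℝ (Iio 0) X) (hY : ConvexOn ℝ (Iio 0) Y)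
    (h : ∀ s < 0, ∀ t < 0, a * X (a * s + b * t) + b * Y (a * s + b * t) ≤ a * X s + b * Y t) :
    ∃ d, ∀ s < 0, Y s = X s + d := by
  have hcont : ContinuousOn (fun s => Y s - X s) (Iio 0) :=
    (hY.continuousOn isOpen_Iio).sub (hX.continuousOn isOpen_Iio)
  have hderiv (t : ℝ) (ht : t < 0) : HasDerivWithinAt (fun s => Y s - X s) 0 (Ici t) t := by
    have hmem : t ∈ interior (Iio (0 : ℝ)) := by simpa using ht
    have hXt := hX.hasDerivWithinAt_rightDeriv_of_mem_interior hmem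
    have hYt := hY.hasDerivWithinAt_rightDeriv_of_mem_interior hmem
    have hYX := rightDeriv_le_rightDeriv_of_infConvolution ha hb hab ht hXt hYt
      fun s hs => h s hs.2 t ht
    have hXY := rightDeriv_le_rightDeriv_of_infConvolution hb ha (add_comm a b ▸ hab) ht hYt hXt
      fun s hs => by
        have := h t ht s hs.2
        rw [add_comm (b * s)]
        linarith
    rw [← hasDerivWithinAt_Ioi_iff_Ici]
    exact (sub_eq_zero.2 (hYX.antisymm hXY)) ▸ hYt.sub hXt
  have hconst {s t : ℝ} (hst : s ≤ t) (ht : t < 0) : Y t - X t = Y s - X s :=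
    constant_of_has_deriv_right_zero (hcont.mono fun x hx => hx.2.trans_lt ht)
      (fun x hx => hderiv x (hx.2.trans ht)) t ⟨hst, le_rfl⟩
  refine ⟨Y (-1) - X (-1), fun s hs => ?_⟩
  rcases le_total s (-1) with hs1 | hs1
  · linarith [hconst hs1 (by norm_num)]
  · linarith [hconst hs1 hs]

end InfConvolution

variable {ν₁ ν₂ : Measure ℝ}

lemma cdf_add_le_of_quantile_eq_add {X Y : ℝ → ℝ} {d : ℝ}
    (hX : ∀ s < 0, cdf ν₁ (X s) = Real.exp s) (hY : ∀ s < 0, cdf ν₂ (Y s) = Real.exp s)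
    (hd : ∀ s < 0, Y s = X s + d) (x : ℝ) : cdf ν₂ (x + d) ≤ cdf ν₁ x := by
  by_contra! hlt
  obtain ⟨u, hxu, hux⟩ := exists_between hlt
  have hu : 0 < u := (cdf_nonneg ν₁ x).trans_lt hxu
  have hlog : Real.log u < 0 := Real.log_neg hu (hux.trans_le (cdf_le_one ν₂ _))
  have hXu : cdf ν₁ (X (Real.log u)) = u := (hX _ hlog).trans (Real.exp_log hu)
  have hYu : cdf ν₂ (Y (Real.log u)) = u := (hY _ hlog).trans (Real.exp_log hu)
  have hxX : x < X (Real.log u) := (monotone_cdf ν₁).reflect_lt (by rwa [hXu])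
  have hYx : Y (Real.log u) < x + d := (monotone_cdf ν₂).reflect_lt (by rwa [hYu])
  linarith [hd _ hlog]

-- In terms of the quantile functions `X`, `Y` of `ν₁`, `ν₂` at level `exp s`, the two inequalities
-- force `a * X + b * Y` to be the quantile function of `ν₃` and to be dominated by the
-- inf-convolution of `X` and `Y`.
theorem exists_eq_map_add_of_logConcave_cdf {a b : ℝ} (ha : 0 < a) (hb : 0 < b) (hab : a + b = 1)
    [IsProbabilityMeasure ν₁] [IsProbabilityMeasure ν₂] [NullSingletonClass ν₁]
    [NullSingletonClass ν₂] {ν₃ : Measure ℝ}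
    (h₁ : LogConcave (cdf ν₁)) (h₂ : LogConcave (cdf ν₂)) (h₃ : LogConcave (cdf ν₃))
    (hlower : ∀ x y, cdf ν₁ x ^ a * cdf ν₂ y ^ b ≤ cdf ν₃ (a * x + b * y))
    (hupper : ∀ x y, (1 - cdf ν₁ x) ^ a * (1 - cdf ν₂ y) ^ b ≤ 1 - cdf ν₃ (a * x + b * y)) :
    ∃ d, ν₂ = ν₁.map (· + d) := by
  obtain ⟨X, hX⟩ := exists_quantile ν₁
  obtain ⟨Y, hY⟩ := exists_quantile ν₂
  have hZ (s : ℝ) (hs : s < 0) : cdf ν₃ (a * X s + b * Y s) = Real.exp s := by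
    have hle := hlower (X s) (Y s)
    have hge := hupper (X s) (Y s)
    rw [hX s hs, hY s hs] at hle hge
    rw [← Real.rpow_add (Real.exp_pos s), hab, Real.rpow_one] at hle
    rw [← Real.rpow_add (sub_pos.2 (Real.exp_lt_one_iff.2 hs)), hab, Real.rpow_one] at hge
    linarith
  obtain ⟨d, hd⟩ := exists_forall_eq_add_of_infConvolution ha hb hab (convexOn_quantile h₁ hX)
    (convexOn_quantile h₂ hY) fun s hs t ht => by
      have hst : a * s + b * t < 0 := convex_Iio (0 : ℝ) hs ht ha.le hb.le hab
      refine le_of_cdf_eq_exp h₃ hst (hZ _ hst) ?_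
      rw [← exp_rpow_mul_exp_rpow, ← hX s hs, ← hY t ht]
      exact hlower (X s) (Y t)
  have : IsProbabilityMeasure (ν₁.map (· + d)) :=
    Measure.isProbabilityMeasure_map (by fun_prop)
  refine ⟨d, Measure.eq_of_cdf _ _ (StieltjesFunction.ext fun x => ?_)⟩
  have hmap : cdf (ν₁.map (· + d)) x = cdf ν₁ (x - d) := by
    rw [cdf_eq_real, cdf_eq_real, map_measureReal_apply (by fun_prop) measurableSet_Iic]
    congr 1
    ext y
    simp [le_sub_iff_add_le]
  rw [hmap]
  refine le_antisymm ?_ ?_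
  · simpa using cdf_add_le_of_quantile_eq_add hX hY hd (x - d)
  · simpa [sub_eq_add_neg] using
      cdf_add_le_of_quantile_eq_add hY hX (fun s hs => by linarith [hd s hs]) x

end LogConcaveDistribution

section CramerWold

variable {E : Type*} [NormedAddCommGroup E] [NormedSpace ℝ E] [CompleteSpace E]
  [SecondCountableTopology E] [MeasurableSpace E] [BorelSpace E]

lemma measure_ext_of_forall_map_dual {m₁ m₂ : Measure E} [IsFiniteMeasure m₁] [IsFiniteMeasure m₂]
    (h : ∀ φ : StrongDual ℝ E, m₁.map φ = m₂.map φ) : m₁ = m₂ :=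
  Measure.ext_of_charFunDual (funext fun φ => by
    rw [charFunDual_eq_charFun_map_one, h φ, charFunDual_eq_charFun_map_one])

-- The translation vector is the difference of the means.
theorem exists_eq_map_add_of_forall_map_dual {m₁ m₂ : Measure E} [IsProbabilityMeasure m₁]
    [IsFiniteMeasure m₂] (hm₁ : Integrable (fun x => x) m₁)
    (hm₂ : Integrable (fun x => x) m₂)
    (h : ∀ φ : StrongDual ℝ E, ∃ d, m₂.map φ = (m₁.map φ).map (· + d)) :
    ∃ c, m₂ = m₁.map (· + c) := by
  refine ⟨∫ x, x ∂m₂ - ∫ x, x ∂m₁, measure_ext_of_forall_map_dual fun φ => ?_⟩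
  obtain ⟨d, hd⟩ := h φ
  have hmean : φ (∫ x, x ∂m₂) = φ (∫ x, x ∂m₁) + d := by
    calc φ (∫ x, x ∂m₂) = ∫ x, φ x ∂m₂ := (φ.integral_comp_comm hm₂).symm
      _ = ∫ y, y ∂m₂.map φ :=
          (integral_map φ.continuous.aemeasurable aestronglyMeasurable_id).symm
      _ = ∫ x, (φ x + d) ∂m₁ := by
          rw [hd, Measure.map_map (by fun_prop) (by fun_prop)]
          exact integral_map (by fun_prop) aestronglyMeasurable_id
      _ = φ (∫ x, x ∂m₁) + d := by
          rw [integral_add (φ.integrable_comp hm₁) (integrable_const d), integral_const,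
            probReal_univ, one_smul]
          exact congrArg (· + d) (φ.integral_comp_comm hm₁)
  rw [hd, Measure.map_map (by fun_prop) (by fun_prop), Measure.map_map (by fun_prop) (by fun_prop)]
  congr 1
  ext x
  simp [hmean]

end CramerWold

/-- A convex body: a compact convex set with nonempty interior. It is a predicate on sets, unlike
the bundled `ConvexBody`, whose interior may be empty. -/
structure IsConvexBody {E : Type*} [AddCommGroup E] [Module ℝ E] [TopologicalSpace E]
    (K : Set E) : Prop where
  isCompact : IsCompact K
  convex : Convex ℝ K
  nonempty_interior : (interior K).Nonempty

namespace IsConvexBody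

variable {E : Type*} [NormedAddCommGroup E] [NormedSpace ℝ E] {K T : Set E}

lemma nonempty (hK : IsConvexBody K) : K.Nonempty := hK.nonempty_interior.mono interior_subset

lemma vadd (hK : IsConvexBody K) (x : E) : IsConvexBody (x +ᵥ K) where
  isCompact := hK.isCompact.vadd x
  convex := hK.convex.vadd x
  nonempty_interior := interior_vadd x K ▸ hK.nonempty_interior.vadd_set

lemma smul (hK : IsConvexBody K) {r : ℝ} (hr : r ≠ 0) : IsConvexBody (r • K) where
  isCompact := hK.isCompact.smul r
  convex := hK.convex.smul r
  nonempty_interior := interior_smul₀ hr K ▸ hK.nonempty_interior.smul_set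

lemma neg (hK : IsConvexBody K) : IsConvexBody (-K) := by
  simpa only [neg_smul_set, one_smul] using hK.smul (neg_ne_zero.2 (one_ne_zero (α := ℝ)))

lemma add (hK : IsConvexBody K) (hT : IsConvexBody T) : IsConvexBody (K + T) where
  isCompact := hK.isCompact.add hT.isCompact
  convex := hK.convex.add hT.convex
  nonempty_interior := (hK.nonempty_interior.add hT.nonempty).mono
    (isOpen_interior.add_right.subset_interior_iff.2 (add_subset_add_right interior_subset))

lemma closure_interior (hK : IsConvexBody K) : closure (interior K) = K :=
  (hK.convex.closure_interior_eq_closure_of_nonempty_interior hK.nonempty_interior).trans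
    hK.isCompact.isClosed.closure_eq

variable [MeasurableSpace E]

lemma measurableSet [BorelSpace E] (hK : IsConvexBody K) : MeasurableSet K :=
  hK.isCompact.measurableSet

lemma measureReal_pos (μ : Measure E) [μ.IsOpenPosMeasure] [IsFiniteMeasureOnCompacts μ]
    (hK : IsConvexBody K) :
    0 < μ.real K :=
  ENNReal.toReal_pos (Measure.measure_pos_of_nonempty_interior μ hK.nonempty_interior).ne'
    hK.isCompact.measure_ne_top

variable {μ : Measure E}

lemma subset_of_measure_diff_eq_zero [μ.IsOpenPosMeasure] (hK : IsConvexBody K) (hT : IsClosed T)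
    (h : μ (K \ T) = 0) : K ⊆ T := by
  have hempty : interior K \ T = ∅ :=
    ((isOpen_interior.sdiff hT).measure_eq_zero_iff μ).1
      (measure_mono_null (sdiff_subset_sdiff_left interior_subset) h)
  exact hK.closure_interior ▸ closure_minimal (sdiff_eq_empty.1 hempty) hT

lemma eq_of_restrict_eq [BorelSpace E] [μ.IsOpenPosMeasure] (hK : IsConvexBody K)
    (hT : IsConvexBody T) (h : μ.restrict K = μ.restrict T) : K = T := by
  have hdiff {A B : Set E} (hB : MeasurableSet B)
      (hAB : μ.restrict A = μ.restrict B) : μ (A \ B) = 0 := by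
    rw [sdiff_eq, inter_comm, ← Measure.restrict_apply hB.compl, hAB,
      Measure.restrict_apply hB.compl, compl_inter_self, measure_empty]
  exact (hK.subset_of_measure_diff_eq_zero hT.isCompact.isClosed
    (hdiff hT.measurableSet h)).antisymm
    (hT.subset_of_measure_diff_eq_zero hK.isCompact.isClosed
      (hdiff hK.measurableSet h.symm))

end IsConvexBody

section Marginal

lemma isProbabilityMeasure_restrict_of_real_eq_one {α : Type*} [MeasurableSpace α] {μ : Measure α}
    {s : Set α} (hs : μ.real s = 1) : IsProbabilityMeasure (μ.restrict s) :=
  ⟨Measure.restrict_apply_univ (μ := μ) s ▸ (ENNReal.toReal_eq_one_iff _).1 hs⟩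

variable {E : Type*} [NormedAddCommGroup E] [NormedSpace ℝ E] [MeasurableSpace E] [BorelSpace E]
  {μ : Measure E} {a b : ℝ} {K T : Set E}

/-- The marginal of `K` along `φ`: the distribution of `φ` under the restriction of `μ` to `K`. -/
noncomputable def marginal (μ : Measure E) (K : Set E) (φ : StrongDual ℝ E) : Measure ℝ :=
  (μ.restrict K).map φ

lemma marginal_real_apply (K : Set E) (φ : StrongDual ℝ E) {A : Set ℝ} (hA : MeasurableSet A) :
    (marginal μ K φ).real A = μ.real (K ∩ φ ⁻¹' A) := by
  rw [marginal, map_measureReal_apply (by fun_prop) hA,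
    measureReal_restrict_apply (hA.preimage (by fun_prop)), inter_comm]

lemma isProbabilityMeasure_marginal (hK : μ.real K = 1) (φ : StrongDual ℝ E) :
    IsProbabilityMeasure (marginal μ K φ) :=
  have := isProbabilityMeasure_restrict_of_real_eq_one hK
  Measure.isProbabilityMeasure_map (by fun_prop)

variable [FiniteDimensional ℝ E] [μ.IsAddHaarMeasure]

lemma addHaar_preimage_singleton {φ : StrongDual ℝ E} (hφ : φ ≠ 0) (t : ℝ) :
    μ (φ ⁻¹' {t}) = 0 := by
  replace hφ : φ.toLinearMap ≠ 0 := fun h => hφ (ContinuousLinearMap.coe_injective h)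
  obtain ⟨v, rfl⟩ := LinearMap.surjective hφ t
  have hfiber : φ ⁻¹' {φ.toLinearMap v} = v +ᵥ (φ.toLinearMap.ker : Set E) := by
    ext x
    simp [mem_vadd_set_iff_neg_vadd_mem, neg_add_eq_sub, sub_eq_zero]
  rw [hfiber, measure_vadd]
  exact Measure.addHaar_submodule μ _ (mt LinearMap.ker_eq_top.1 hφ)

lemma nullSingletonClass_marginal (K : Set E) {φ : StrongDual ℝ E} (hφ : φ ≠ 0) :
    NullSingletonClass (marginal μ K φ) where
  measure_singleton t := by
    rw [marginal, Measure.map_apply (by fun_prop) (measurableSet_singleton t)]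
    exact Measure.restrict_le_self.absolutelyContinuous (addHaar_preimage_singleton hφ t)

lemma measure_rpow_mul_measure_rpow_le (ha : 0 < a) (hb : 0 < b) (hab : a + b = 1)
    {A B C : Set E} (hA : MeasurableSet A) (hB : MeasurableSet B) (hC : MeasurableSet C)
    (hABC : a • A + b • B ⊆ C) : μ A ^ a * μ B ^ b ≤ μ C := by
  rw [← lintegral_indicator_one hA, ← lintegral_indicator_one hB, ← lintegral_indicator_one hC]
  refine prekopaLeindler μ ha hb hab (measurable_one.indicator hA) (measurable_one.indicator hB)
    (measurable_one.indicator hC) fun x y => ?_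
  by_cases hx : x ∈ A
  · by_cases hy : y ∈ B
    · simp [hx, hy, hABC (add_mem_add (smul_mem_smul_set hx) (smul_mem_smul_set hy))]
    · simp [hy, hb]
  · simp [hx, ha]

lemma measureReal_rpow_mul_measureReal_rpow_le (ha : 0 < a) (hb : 0 < b) (hab : a + b = 1)
    {A B C : Set E} (hA : MeasurableSet A) (hB : MeasurableSet B) (hC : MeasurableSet C)
    (hABC : a • A + b • B ⊆ C) (hCtop : μ C ≠ ∞) : μ.real A ^ a * μ.real B ^ b ≤ μ.real C := by
  have h := ENNReal.toReal_mono hCtop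
    (measure_rpow_mul_measure_rpow_le ha hb hab hA hB hC hABC)
  rwa [ENNReal.toReal_mul, ← ENNReal.toReal_rpow, ← ENNReal.toReal_rpow] at h

lemma marginal_rpow_mul_marginal_rpow_le (ha : 0 < a) (hb : 0 < b) (hab : a + b = 1)
    (hK : IsCompact K) (hT : IsCompact T) (φ : StrongDual ℝ E) {A B C : Set ℝ}
    (hA : MeasurableSet A) (hB : MeasurableSet B) (hC : MeasurableSet C)
    (hABC : ∀ s ∈ A, ∀ t ∈ B, a * s + b * t ∈ C) :
    (marginal μ K φ).real A ^ a * (marginal μ T φ).real B ^ b ≤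
      (marginal μ (a • K + b • T) φ).real C := by
  have hKT : IsCompact (a • K + b • T) := (hK.smul a).add (hT.smul b)
  have hφ : Measurable φ := by fun_prop
  rw [marginal_real_apply K φ hA, marginal_real_apply T φ hB, marginal_real_apply _ φ hC]
  refine measureReal_rpow_mul_measureReal_rpow_le ha hb hab (hK.measurableSet.inter (hφ hA))
    (hT.measurableSet.inter (hφ hB)) (hKT.measurableSet.inter (hφ hC)) ?_
    (measure_ne_top_of_subset inter_subset_left hKT.measure_ne_top)
  rintro _ ⟨_, ⟨x, ⟨hxK, hxA⟩, rfl⟩, _, ⟨y, ⟨hyT, hyB⟩, rfl⟩, rfl⟩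
  refine ⟨add_mem_add (smul_mem_smul_set hxK) (smul_mem_smul_set hyT), ?_⟩
  simpa using hABC _ hxA _ hyB

lemma cdf_marginal_rpow_mul_le (ha : 0 < a) (hb : 0 < b) (hab : a + b = 1)
    (hK : IsCompact K) (hT : IsCompact T) (hK1 : μ.real K = 1) (hT1 : μ.real T = 1)
    (hKT1 : μ.real (a • K + b • T) = 1) (φ : StrongDual ℝ E) (x y : ℝ) :
    cdf (marginal μ K φ) x ^ a * cdf (marginal μ T φ) y ^ b ≤
      cdf (marginal μ (a • K + b • T) φ) (a * x + b * y) := by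
  have := isProbabilityMeasure_marginal hK1 φ
  have := isProbabilityMeasure_marginal hT1 φ
  have := isProbabilityMeasure_marginal hKT1 φ
  simp only [cdf_eq_real]
  refine marginal_rpow_mul_marginal_rpow_le ha hb hab hK hT φ measurableSet_Iic measurableSet_Iic
    measurableSet_Iic fun s hs t ht => ?_
  rw [mem_Iic] at *
  gcongr

lemma one_sub_cdf_marginal_rpow_mul_le (ha : 0 < a) (hb : 0 < b) (hab : a + b = 1)
    (hK : IsCompact K) (hT : IsCompact T) (hK1 : μ.real K = 1) (hT1 : μ.real T = 1)
    (hKT1 : μ.real (a • K + b • T) = 1) (φ : StrongDual ℝ E) (x y : ℝ) :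
    (1 - cdf (marginal μ K φ) x) ^ a * (1 - cdf (marginal μ T φ) y) ^ b ≤
      1 - cdf (marginal μ (a • K + b • T) φ) (a * x + b * y) := by
  have := isProbabilityMeasure_marginal hK1 φ
  have := isProbabilityMeasure_marginal hT1 φ
  have := isProbabilityMeasure_marginal hKT1 φ
  simp only [cdf_eq_real, ← probReal_compl_eq_one_sub measurableSet_Iic, compl_Iic]
  refine marginal_rpow_mul_marginal_rpow_le ha hb hab hK hT φ measurableSet_Ioi measurableSet_Ioi
    measurableSet_Ioi fun s hs t ht => ?_
  rw [mem_Ioi] at *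
  gcongr

lemma logConcave_cdf_marginal (hK : IsCompact K) (hKconv : Convex ℝ K) (hK1 : μ.real K = 1)
    (φ : StrongDual ℝ E) : LogConcave (cdf (marginal μ K φ)) := fun a b ha hb hab x y => by
  have hKab : a • K + b • K = K := by rw [← hKconv.add_smul ha.le hb.le, hab, one_smul]
  simpa only [hKab] using
    cdf_marginal_rpow_mul_le ha hb hab hK hK hK1 hK1 (hKab.symm ▸ hK1) φ x y

theorem exists_marginal_eq_map_add (ha : 0 < a) (hb : 0 < b) (hab : a + b = 1)
    (hK : IsCompact K) (hKconv : Convex ℝ K) (hT : IsCompact T) (hTconv : Convex ℝ T)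
    (hK1 : μ.real K = 1) (hT1 : μ.real T = 1)
    (hKT1 : μ.real (a • K + b • T) = 1) (φ : StrongDual ℝ E) :
    ∃ d, marginal μ T φ = (marginal μ K φ).map (· + d) := by
  have := isProbabilityMeasure_marginal hK1 φ
  have := isProbabilityMeasure_marginal hT1 φ
  rcases eq_or_ne φ 0 with rfl | hφ
  · have hdirac (S : Set E) (hS : μ.real S = 1) : marginal μ S 0 = Measure.dirac 0 := by
      have := isProbabilityMeasure_restrict_of_real_eq_one hS
      exact (Measure.map_const _ (0 : ℝ)).trans (by simp)
    exact ⟨0, by simp [hdirac K hK1, hdirac T hT1]⟩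
  have := nullSingletonClass_marginal (μ := μ) K hφ
  have := nullSingletonClass_marginal (μ := μ) T hφ
  exact exists_eq_map_add_of_logConcave_cdf ha hb hab (logConcave_cdf_marginal hK hKconv hK1 φ)
    (logConcave_cdf_marginal hT hTconv hT1 φ)
    (logConcave_cdf_marginal ((hK.smul a).add (hT.smul b)) ((hKconv.smul a).add (hTconv.smul b))
      hKT1 φ)
    (cdf_marginal_rpow_mul_le ha hb hab hK hT hK1 hT1 hKT1 φ)
    (one_sub_cdf_marginal_rpow_mul_le ha hb hab hK hT hK1 hT1 hKT1 φ)

theorem exists_eq_vadd_of_measureReal_eq_one (ha : 0 < a) (hb : 0 < b) (hab : a + b = 1)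
    (hK : IsConvexBody K) (hT : IsConvexBody T) (hK1 : μ.real K = 1) (hT1 : μ.real T = 1)
    (hKT1 : μ.real (a • K + b • T) = 1) : ∃ c : E, T = c +ᵥ K := by
  have := isProbabilityMeasure_restrict_of_real_eq_one hK1
  have := isProbabilityMeasure_restrict_of_real_eq_one hT1
  obtain ⟨c, hc⟩ := exists_eq_map_add_of_forall_map_dual
    (continuous_id.continuousOn.integrableOn_compact hK.isCompact)
    (continuous_id.continuousOn.integrableOn_compact hT.isCompact)
    (exists_marginal_eq_map_add ha hb hab hK.isCompact hK.convex hT.isCompact hT.convex hK1 hT1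
      hKT1)
  refine ⟨c, hT.eq_of_restrict_eq (μ := μ) (hK.vadd c) (hc.trans ?_)⟩
  have hpre : (· + c) ⁻¹' (c +ᵥ K) = K := by
    ext x
    simp [mem_vadd_set_iff_neg_vadd_mem]
  rw [← ((measurePreserving_add_right μ c).restrict_preimage (hK.vadd c).measurableSet).map_eq,
    hpre]

end Marginal

section Homothetic

variable {E : Type*} [AddCommGroup E] [Module ℝ E] {K L T : Set E}

lemma smul_vadd_set (r : ℝ) (x : E) (K : Set E) : r • (x +ᵥ K) = r • x +ᵥ r • K := by
  simp only [← image_vadd, ← image_smul, image_image, vadd_eq_add, smul_add]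

lemma neg_vadd_set (x : E) (K : Set E) : -(x +ᵥ K) = -x +ᵥ -K := by
  simpa only [neg_smul_set, neg_smul, one_smul] using smul_vadd_set (-1) x K

lemma add_vadd_smul_of_convex (hK : Convex ℝ K) (x : E) {r : ℝ} (hr : 0 ≤ r) :
    K + (x +ᵥ r • K) = x +ᵥ (1 + r) • K := by
  rw [hK.add_smul zero_le_one hr, one_smul, add_vadd_comm]

lemma div_smul_inv_smul_add_div_smul_inv_smul {k t : ℝ} (hk : k ≠ 0) (ht : t ≠ 0) (K T : Set E) :
    (k / (k + t)) • k⁻¹ • K + (t / (k + t)) • t⁻¹ • T = (k + t)⁻¹ • (K + T) := by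
  rw [smul_smul, smul_smul, smul_add]
  congr 2 <;> field_simp

/-- `T` is a homothetic copy of `K`: a translate of a positive multiple of `K`. -/
def Homothetic (K T : Set E) : Prop := ∃ x : E, ∃ r : ℝ, 0 < r ∧ T = x +ᵥ r • K

namespace Homothetic

lemma of_vadd (x : E) (K : Set E) : Homothetic K (x +ᵥ K) :=
  ⟨x, 1, one_pos, by rw [one_smul]⟩

lemma of_smul {r : ℝ} (hr : 0 < r) (K : Set E) : Homothetic K (r • K) :=
  ⟨0, r, hr, (zero_vadd E _).symm⟩

lemma symm (h : Homothetic K T) : Homothetic T K := by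
  obtain ⟨x, r, hr, rfl⟩ := h
  refine ⟨-(r⁻¹ • x), r⁻¹, inv_pos.2 hr, ?_⟩
  rw [smul_vadd_set, smul_smul, inv_mul_cancel₀ hr.ne', one_smul, neg_vadd_vadd]

lemma trans (h : Homothetic K T) (h' : Homothetic T L) : Homothetic K L := by
  obtain ⟨x, r, hr, rfl⟩ := h
  obtain ⟨y, s, hs, rfl⟩ := h'
  exact ⟨y + s • x, s * r, mul_pos hs hr, by rw [smul_vadd_set, smul_smul, add_vadd]⟩

lemma neg (h : Homothetic K T) : Homothetic (-K) (-T) := by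
  obtain ⟨x, r, hr, rfl⟩ := h
  exact ⟨-x, r, hr, by rw [neg_vadd_set, smul_set_neg]⟩

end Homothetic

end Homothetic

section BrunnMinkowski

variable {E : Type*} [NormedAddCommGroup E] [NormedSpace ℝ E] [MeasurableSpace E]

/-- The volume radius of `K`: up to a constant, the radius of a ball with the same measure. -/
noncomputable def volumeRadius (μ : Measure E) (K : Set E) : ℝ :=
  μ.real K ^ (finrank ℝ E : ℝ)⁻¹

section Monotone

variable {μ : Measure E} {K T : Set E}

lemma volumeRadius_nonneg (μ : Measure E) (K : Set E) : 0 ≤ volumeRadius μ K :=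
  Real.rpow_nonneg measureReal_nonneg _

lemma volumeRadius_mono (h : μ.real K ≤ μ.real T) : volumeRadius μ K ≤ volumeRadius μ T :=
  Real.rpow_le_rpow measureReal_nonneg h (inv_nonneg.2 (Nat.cast_nonneg _))

lemma IsConvexBody.volumeRadius_pos (μ : Measure E) [μ.IsOpenPosMeasure]
    [IsFiniteMeasureOnCompacts μ] (hK : IsConvexBody K) : 0 < volumeRadius μ K :=
  Real.rpow_pos_of_pos (hK.measureReal_pos μ) _

variable [FiniteDimensional ℝ E] [Nontrivial E]

lemma volumeRadius_pow (μ : Measure E) (K : Set E) :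
    volumeRadius μ K ^ finrank ℝ E = μ.real K :=
  Real.rpow_inv_natCast_pow measureReal_nonneg finrank_pos.ne'

lemma volumeRadius_le_volumeRadius_iff :
    volumeRadius μ K ≤ volumeRadius μ T ↔ μ.real K ≤ μ.real T := by
  rw [← volumeRadius_pow μ K, ← volumeRadius_pow μ T,
    pow_le_pow_iff_left₀ (volumeRadius_nonneg μ K) (volumeRadius_nonneg μ T) finrank_pos.ne']

lemma volumeRadius_empty (μ : Measure E) : volumeRadius μ ∅ = 0 := by
  rw [volumeRadius, measureReal_empty, Real.zero_rpow (by simp [finrank_pos.ne'])]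

lemma IsConvexBody.eq_of_subset_of_volumeRadius_le [BorelSpace E] [μ.IsOpenPosMeasure]
    [IsFiniteMeasureOnCompacts μ] (hT : IsConvexBody T) (hK : IsClosed K) (hKT : K ⊆ T)
    (h : volumeRadius μ T ≤ volumeRadius μ K) : K = T := by
  refine hKT.antisymm (hT.subset_of_measure_diff_eq_zero (μ := μ) hK ?_)
  have htop := hT.isCompact.measure_ne_top (μ := μ)
  rw [measure_sdiff hKT hK.measurableSet.nullMeasurableSet (measure_ne_top_of_subset hKT htop),
    tsub_eq_zero_iff_le]
  exact (ENNReal.toReal_le_toReal htop (measure_ne_top_of_subset hKT htop)).1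
    (volumeRadius_le_volumeRadius_iff.1 h)

lemma measureReal_eq_one_iff : μ.real K = 1 ↔ volumeRadius μ K = 1 := by
  rw [← volumeRadius_pow,
    pow_eq_one_iff_of_nonneg (volumeRadius_nonneg μ K) finrank_pos.ne']

end Monotone

variable [FiniteDimensional ℝ E] [BorelSpace E] {μ : Measure E} [μ.IsAddHaarMeasure]
  {K T : Set E}

lemma volumeRadius_vadd (x : E) (K : Set E) : volumeRadius μ (x +ᵥ K) = volumeRadius μ K := by
  rw [volumeRadius, measureReal_def, measure_vadd, volumeRadius, measureReal_def]

lemma volumeRadius_neg (K : Set E) : volumeRadius μ (-K) = volumeRadius μ K := by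
  rw [volumeRadius, measureReal_def, Measure.measure_neg, volumeRadius, measureReal_def]

lemma addHaar_real_smul (μ : Measure E) [μ.IsAddHaarMeasure] (r : ℝ) (K : Set E) :
    μ.real (r • K) = |r| ^ finrank ℝ E * μ.real K := by
  rw [measureReal_def, Measure.addHaar_smul, ENNReal.toReal_mul,
    ENNReal.toReal_ofReal (abs_nonneg _), abs_pow, measureReal_def]

variable [Nontrivial E]

lemma volumeRadius_smul {r : ℝ} (hr : 0 ≤ r) (K : Set E) :
    volumeRadius μ (r • K) = r * volumeRadius μ K := by
  rw [volumeRadius, addHaar_real_smul, Real.mul_rpow (by positivity) measureReal_nonneg,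
    abs_of_nonneg hr, Real.pow_rpow_inv_natCast hr finrank_pos.ne', volumeRadius]

lemma measureReal_inv_volumeRadius_smul (hK : 0 < volumeRadius μ K) :
    μ.real ((volumeRadius μ K)⁻¹ • K) = 1 := by
  rw [measureReal_eq_one_iff, volumeRadius_smul (inv_pos.2 hK).le, inv_mul_cancel₀ hK.ne']

lemma Homothetic.exists_eq_vadd_iff (hK : IsConvexBody K) :
    (∃ x : E, T = x +ᵥ K) ↔ Homothetic K T ∧ volumeRadius μ K = volumeRadius μ T := by
  constructor
  · rintro ⟨x, rfl⟩
    exact ⟨.of_vadd x K, (volumeRadius_vadd x K).symm⟩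
  · rintro ⟨⟨x, r, hr, rfl⟩, h⟩
    rw [volumeRadius_vadd, volumeRadius_smul hr.le, right_eq_mul₀ (hK.volumeRadius_pos μ).ne'] at h
    exact ⟨x, by rw [h, one_smul]⟩

theorem volumeRadius_add_le (hK : IsCompact K) (hT : IsCompact T) (hK' : K.Nonempty)
    (hT' : T.Nonempty) : volumeRadius μ K + volumeRadius μ T ≤ volumeRadius μ (K + T) := by
  have hKT : IsCompact (K + T) := hK.add hT
  rcases (volumeRadius_nonneg μ K).eq_or_lt with hk | hk
  · obtain ⟨x, hx⟩ := hK'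
    rw [← hk, zero_add, ← volumeRadius_vadd x T]
    exact volumeRadius_mono (measureReal_mono (vadd_set_subset_add hx) hKT.measure_ne_top)
  rcases (volumeRadius_nonneg μ T).eq_or_lt with ht | ht
  · obtain ⟨y, hy⟩ := hT'
    rw [← ht, add_zero, ← volumeRadius_vadd y K]
    rw [add_comm] at hKT ⊢
    exact volumeRadius_mono (measureReal_mono (vadd_set_subset_add hy) hKT.measure_ne_top)
  set k := volumeRadius μ K
  set t := volumeRadius μ T
  have hkt : 0 < k + t := add_pos hk ht
  have hnorm := div_smul_inv_smul_add_div_smul_inv_smul hk.ne' ht.ne' K T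
  have hone : 1 ≤ μ.real ((k + t)⁻¹ • (K + T)) := by
    simpa [k, t, measureReal_inv_volumeRadius_smul hk, measureReal_inv_volumeRadius_smul ht] using
      measureReal_rpow_mul_measureReal_rpow_le (μ := μ) (div_pos hk hkt) (div_pos ht hkt)
        (by rw [← add_div, div_self hkt.ne']) (hK.smul k⁻¹).measurableSet
        (hT.smul t⁻¹).measurableSet (hKT.smul (k + t)⁻¹).measurableSet hnorm.subset
        (hKT.smul (k + t)⁻¹).measure_ne_top
  have hradius : 1 ≤ volumeRadius μ ((k + t)⁻¹ • (K + T)) :=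
    Real.one_le_rpow hone (inv_nonneg.2 (Nat.cast_nonneg _))
  rwa [volumeRadius_smul (inv_pos.2 hkt).le, ← div_eq_inv_mul, one_le_div hkt] at hradius

theorem IsConvexBody.volumeRadius_add_eq_iff (hK : IsConvexBody K) (hT : IsConvexBody T) :
    volumeRadius μ (K + T) = volumeRadius μ K + volumeRadius μ T ↔ Homothetic K T := by
  have hk := hK.volumeRadius_pos μ
  have ht := hT.volumeRadius_pos μ
  have hkt := add_pos hk ht
  constructor
  · intro h
    obtain ⟨c, hc⟩ := exists_eq_vadd_of_measureReal_eq_one (μ := μ) (div_pos hk hkt)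
      (div_pos ht hkt) (by rw [← add_div, div_self hkt.ne']) (hK.smul (inv_pos.2 hk).ne')
      (hT.smul (inv_pos.2 ht).ne') (measureReal_inv_volumeRadius_smul hk)
      (measureReal_inv_volumeRadius_smul ht) (by
        rw [div_smul_inv_smul_add_div_smul_inv_smul hk.ne' ht.ne', ← h]
        exact measureReal_inv_volumeRadius_smul (h ▸ hkt))
    have hKT : Homothetic ((volumeRadius μ K)⁻¹ • K) ((volumeRadius μ T)⁻¹ • T) :=
      hc ▸ .of_vadd c _
    exact ((Homothetic.of_smul (inv_pos.2 hk) K).trans hKT).trans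
      (Homothetic.of_smul (inv_pos.2 ht) T).symm
  · rintro ⟨x, r, hr, rfl⟩
    rw [add_vadd_smul_of_convex hK.convex x hr.le, volumeRadius_vadd, volumeRadius_vadd,
      volumeRadius_smul hr.le, volumeRadius_smul (by positivity)]
    ring

end BrunnMinkowski

section MinkowskiDiff

section Module

variable {E : Type*} [AddCommGroup E] {K L S : Set E}

/-- The Minkowski difference `K ⊖ L`, the largest set `D` with `D + L ⊆ K`. -/
def minkowskiDiff (K L : Set E) : Set E := {z | z +ᵥ L ⊆ K}

lemma subset_minkowskiDiff_iff : S ⊆ minkowskiDiff K L ↔ S + L ⊆ K := by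
  rw [← vadd_eq_add, ← iUnion_vadd_set, iUnion₂_subset_iff]
  rfl

lemma minkowskiDiff_eq_biInter (K L : Set E) : minkowskiDiff K L = ⋂ y ∈ L, (-y +ᵥ K) := by
  ext z
  simp only [minkowskiDiff, mem_ofPred_eq, mem_iInter₂, mem_vadd_set_iff_neg_vadd_mem, neg_neg,
    vadd_eq_add, vadd_set_subset_iff, add_comm]

lemma convex_minkowskiDiff [Module ℝ E] (hK : Convex ℝ K) (L : Set E) :
    Convex ℝ (minkowskiDiff K L) :=
  minkowskiDiff_eq_biInter K L ▸ convex_iInter₂ fun y _ => hK.vadd (-y)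

lemma isCompact_minkowskiDiff [TopologicalSpace E] [T2Space E] [ContinuousAdd E] (hK : IsCompact K)
    (hL : L.Nonempty) : IsCompact (minkowskiDiff K L) := by
  obtain ⟨y, hy⟩ := hL
  rw [minkowskiDiff_eq_biInter]
  exact (hK.vadd (-y)).of_isClosed_subset (isClosed_biInter fun z _ => (hK.vadd (-z)).isClosed)
    (biInter_subset_of_mem hy)

end Module

variable {E : Type*} [NormedAddCommGroup E] [NormedSpace ℝ E] [MeasurableSpace E] [BorelSpace E]
  [FiniteDimensional ℝ E] {μ : Measure E} [μ.IsAddHaarMeasure] {K L : Set E}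

lemma isConvexBody_of_measureReal_pos (hK : IsCompact K) (hKconv : Convex ℝ K)
    (h : 0 < μ.real K) : IsConvexBody K := by
  refine ⟨hK, hKconv, nonempty_iff_ne_empty.2 fun hempty => h.ne' ?_⟩
  simpa [hK.isClosed.frontier_eq, hempty, measureReal_def] using
    congrArg ENNReal.toReal (hKconv.addHaar_frontier μ)

variable [Nontrivial E]

theorem volumeRadius_minkowskiDiff_le (hK : IsCompact K) (hL : IsCompact L) (hL' : L.Nonempty)
    (hLK : volumeRadius μ L ≤ volumeRadius μ K) :
    volumeRadius μ (minkowskiDiff K L) ≤ volumeRadius μ K - volumeRadius μ L := by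
  rcases (minkowskiDiff K L).eq_empty_or_nonempty with hD | hD
  · rwa [hD, volumeRadius_empty, sub_nonneg]
  · rw [le_sub_iff_add_le]
    exact (volumeRadius_add_le (isCompact_minkowskiDiff hK hL') hL hD hL').trans
      (volumeRadius_mono (measureReal_mono (subset_minkowskiDiff_iff.1 Subset.rfl)
        hK.measure_ne_top))

lemma homothetic_of_volumeRadius_minkowskiDiff_add_eq (hK : IsConvexBody K) (hL : IsConvexBody L)
    (hD : IsConvexBody (minkowskiDiff K L))
    (h : volumeRadius μ (minkowskiDiff K L) + volumeRadius μ L = volumeRadius μ K) :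
    Homothetic K L := by
  have hDL : minkowskiDiff K L + L = K :=
    hK.eq_of_subset_of_volumeRadius_le (μ := μ) (hD.add hL).isCompact.isClosed
      (subset_minkowskiDiff_iff.1 Subset.rfl)
      (h ▸ volumeRadius_add_le hD.isCompact hL.isCompact hD.nonempty hL.nonempty)
  obtain ⟨x, r, hr, hx⟩ := ((hD.volumeRadius_add_eq_iff (μ := μ) hL).1 (by rw [hDL, h])).symm
  rw [hx, add_comm, add_vadd_smul_of_convex hL.convex x hr.le] at hDL
  exact Homothetic.symm ⟨x, 1 + r, by positivity, hDL.symm⟩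

lemma Homothetic.sub_le_volumeRadius_minkowskiDiff (h : Homothetic K L) (hK : IsConvexBody K)
    (hLK : volumeRadius μ L ≤ volumeRadius μ K) :
    volumeRadius μ K - volumeRadius μ L ≤ volumeRadius μ (minkowskiDiff K L) := by
  obtain ⟨x, r, hr, rfl⟩ := h
  rw [volumeRadius_vadd, volumeRadius_smul hr.le] at hLK ⊢
  have hr1 : 0 ≤ 1 - r := sub_nonneg.2 ((mul_le_iff_le_one_left (hK.volumeRadius_pos μ)).1 hLK)
  have hsub : -x +ᵥ (1 - r) • K ⊆ minkowskiDiff K (x +ᵥ r • K) := by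
    rw [subset_minkowskiDiff_iff, add_vadd_comm, vadd_add_assoc, vadd_neg_vadd,
      ← hK.convex.add_smul hr1 hr.le, sub_add_cancel, one_smul]
  calc volumeRadius μ K - r * volumeRadius μ K = volumeRadius μ (-x +ᵥ (1 - r) • K) := by
        rw [volumeRadius_vadd, volumeRadius_smul hr1, sub_mul, one_mul]
    _ ≤ volumeRadius μ (minkowskiDiff K (x +ᵥ r • K)) := volumeRadius_mono <| measureReal_mono hsub
        (isCompact_minkowskiDiff hK.isCompact (hK.nonempty.smul_set.vadd_set)).measure_ne_top

theorem volumeRadius_minkowskiDiff_eq_iff (hK : IsConvexBody K) (hL : IsConvexBody L)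
    (hLK : volumeRadius μ L ≤ volumeRadius μ K) :
    volumeRadius μ (minkowskiDiff K L) = volumeRadius μ K - volumeRadius μ L ↔
      volumeRadius μ K = volumeRadius μ L ∨ Homothetic K L := by
  have hle := volumeRadius_minkowskiDiff_le hK.isCompact hL.isCompact hL.nonempty hLK
  constructor
  · intro h
    rcases hLK.eq_or_lt with heq | hlt
    · exact .inl heq.symm
    · exact .inr <| homothetic_of_volumeRadius_minkowskiDiff_add_eq hK hL
        (isConvexBody_of_measureReal_pos (isCompact_minkowskiDiff hK.isCompact hL.nonempty)
          (convex_minkowskiDiff hK.convex L)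
          (volumeRadius_pow μ (minkowskiDiff K L) ▸ pow_pos (h ▸ sub_pos.2 hlt) _))
        (eq_sub_iff_add_eq.1 h)
  · rintro (h | h)
    · exact hle.antisymm (by rw [h, sub_self]; exact volumeRadius_nonneg μ _)
    · exact hle.antisymm (h.sub_le_volumeRadius_minkowskiDiff hK hLK)

end MinkowskiDiff

section Frontier

lemma subset_interior_or_subset_compl_closure {X : Type*} [TopologicalSpace X] {S L : Set X}
    (hS : IsPreconnected S) (h : Disjoint S (frontier L)) :
    S ⊆ interior L ∨ S ⊆ (closure L)ᶜ := by
  refine hS.subset_or_subset isOpen_interior isClosed_closure.isOpen_compl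
    (disjoint_compl_right.mono_left interior_subset_closure) fun x hx => ?_
  by_contra hx'
  rw [mem_union, mem_compl_iff, not_or, not_not] at hx'
  exact disjoint_left.1 h hx ⟨hx'.2, hx'.1⟩

section TopologicalAddGroup

variable {E : Type*} [AddCommGroup E] [TopologicalSpace E] [IsTopologicalAddGroup E] {K T : Set E}

lemma frontier_vadd_neg (z : E) (T : Set E) : frontier (z +ᵥ -T) = z +ᵥ -frontier T := by
  have himage (S : Set E) : z +ᵥ -S = Homeomorph.subLeft z '' S := by
    simp [← image_vadd, ← image_neg_eq_neg, image_image, sub_eq_add_neg]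
  rw [himage, himage, Homeomorph.image_frontier]

lemma interior_minkowskiDiff_add_subset (K L : Set E) :
    interior (minkowskiDiff K L) + L ⊆ interior K :=
  interior_maximal (subset_minkowskiDiff_iff.1 interior_subset) isOpen_interior.add_right

lemma disjoint_frontier_add_frontier_interior_minkowskiDiff (hT : IsClosed T) :
    Disjoint (frontier K + frontier T) (interior (minkowskiDiff K (-T))) := by
  rw [disjoint_left]
  rintro _ ⟨x, hx, t, ht, rfl⟩ hxt
  refine hx.2 (interior_minkowskiDiff_add_subset K (-T) ⟨x + t, hxt, -t, ?_, by simp⟩)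
  exact neg_mem_neg.2 (hT.frontier_subset ht)

end TopologicalAddGroup

variable {E : Type*} [NormedAddCommGroup E] [NormedSpace ℝ E] {K L T : Set E}

lemma subset_of_frontier_subset (hK : IsCompact K) (hL : IsClosed L) (hLconv : Convex ℝ L)
    (hL' : L.Nonempty) (h : frontier K ⊆ L) : K ⊆ L := by
  intro x hx
  by_contra hxL
  obtain ⟨f, u, hfL, hfx⟩ := geometric_hahn_banach_closed_point hLconv hL hxL
  obtain ⟨m, hmK, hm⟩ := hK.exists_isMaxOn ⟨x, hx⟩ f.continuous.continuousOn
  have hm_frontier : m ∈ frontier K := by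
    refine hK.isClosed.frontier_eq ▸ ⟨hmK, fun hm_int => ?_⟩
    have hf0 : f = 0 :=
      (hm.isLocalMax (mem_interior_iff_mem_nhds.1 hm_int)).hasFDerivAt_eq_zero f.hasFDerivAt
    obtain ⟨y, hy⟩ := hL'
    have hlt := (hfL y hy).trans hfx
    simp [hf0] at hlt
  exact (((hfL m (h hm_frontier)).trans hfx).trans_le (hm hx)).false

lemma IsConvexBody.isPreconnected_frontier (hE : 1 < Module.rank ℝ E) (hK : IsConvexBody K) :
    IsPreconnected (frontier K) := by
  obtain ⟨h, -, -, hsphere⟩ := exists_homeomorph_image_interior_closure_frontier_eq_unitBall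
    hK.convex hK.nonempty_interior hK.isCompact.isBounded
  rw [← h.isPreconnected_image, hsphere]
  exact isPreconnected_sphere hE 0 1

theorem IsConvexBody.subset_or_subset_of_disjoint_frontier (hE : 1 < Module.rank ℝ E)
    (hK : IsConvexBody K) (hL : IsClosed L) (hLconv : Convex ℝ L) (hKL : (K ∩ L).Nonempty)
    (hdisj : Disjoint (frontier K) (frontier L)) : K ⊆ L ∨ L ⊆ K := by
  obtain ⟨x, hxK, hxL⟩ := hKL
  rcases subset_interior_or_subset_compl_closure (hK.isPreconnected_frontier hE) hdisj with h | h
  · exact .inl (subset_of_frontier_subset hK.isCompact hL hLconv ⟨x, hxL⟩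
      (h.trans interior_subset))
  have hLK : Disjoint L (frontier K) := by
    rw [hL.closure_eq] at h
    exact (disjoint_left.2 h).symm
  rcases subset_interior_or_subset_compl_closure hLconv.isPreconnected hLK with h' | h'
  · exact .inr (h'.trans interior_subset)
  · exact absurd (subset_closure hxK) (h' hxL)

variable [MeasurableSpace E] [BorelSpace E] [FiniteDimensional ℝ E] {μ : Measure E}
  [μ.IsAddHaarMeasure]

theorem IsConvexBody.frontier_add_frontier_union_minkowskiDiff (hE : 1 < finrank ℝ E)
    (hK : IsConvexBody K) (hT : IsConvexBody T) (hTK : volumeRadius μ T ≤ volumeRadius μ K) :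
    (frontier K + frontier T) ∪ minkowskiDiff K (-T) = K + T := by
  have : Nontrivial E := nontrivial_of_finrank_pos (zero_lt_one.trans hE)
  refine Subset.antisymm (union_subset ?_ fun z hz => ?_) ?_
  · exact add_subset_add hK.isCompact.isClosed.frontier_subset hT.isCompact.isClosed.frontier_subset
  · obtain ⟨t, ht⟩ := hT.nonempty
    exact ⟨z - t, hz ⟨-t, neg_mem_neg.2 ht, (sub_eq_add_neg z t).symm⟩, t, ht, sub_add_cancel z t⟩
  rintro _ ⟨x, hx, y, hy, rfl⟩
  refine or_iff_not_imp_left.2 fun hxy => ?_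
  have hdisj : Disjoint (frontier K) (frontier ((x + y) +ᵥ -T)) := by
    rw [frontier_vadd_neg, disjoint_left]
    rintro u hu ⟨t, ht, rfl⟩
    exact hxy ⟨_, hu, -t, ht, by simp⟩
  have hL : IsConvexBody ((x + y) +ᵥ -T) := hT.neg.vadd (x + y)
  have hxL : (K ∩ ((x + y) +ᵥ -T)).Nonempty := ⟨x, hx, -y, neg_mem_neg.2 hy, by simp⟩
  rcases hK.subset_or_subset_of_disjoint_frontier (by rw [← finrank_eq_rank]; exact_mod_cast hE)
    hL.isCompact.isClosed hL.convex hxL hdisj with h | h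
  · refine (hL.eq_of_subset_of_volumeRadius_le (μ := μ) hK.isCompact.isClosed h ?_).superset
    rwa [volumeRadius_vadd, volumeRadius_neg]
  · exact h

theorem measureReal_frontier_add_frontier_add (hE : 1 < finrank ℝ E)
    (hK : IsConvexBody K) (hT : IsConvexBody T) (hTK : volumeRadius μ T ≤ volumeRadius μ K) :
    μ.real (frontier K + frontier T) + μ.real (minkowskiDiff K (-T)) = μ.real (K + T) := by
  have hD := isCompact_minkowskiDiff hK.isCompact hT.neg.nonempty
  have hunion := hK.frontier_add_frontier_union_minkowskiDiff hE hT hTK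
  have hsub : frontier K + frontier T ⊆ K + T := hunion ▸ subset_union_left
  have hnull : AEDisjoint μ (frontier K + frontier T) (minkowskiDiff K (-T)) := by
    refine measure_mono_null (fun z hz => ?_)
      ((convex_minkowskiDiff hK.convex (-T)).addHaar_frontier μ)
    exact ⟨subset_closure hz.2, disjoint_left.1
      (disjoint_frontier_add_frontier_interior_minkowskiDiff hT.isCompact.isClosed) hz.1⟩
  rw [← hunion, measureReal_union₀ hD.measurableSet.nullMeasurableSet hnull
    (measure_ne_top_of_subset hsub (hK.add hT).isCompact.measure_ne_top) hD.measure_ne_top]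

end Frontier

section PowerSums

lemma pow_sub_pow_eq_pow_sub_pow_iff {a a' b b' : ℝ} {n : ℕ} (hn : n ≠ 0) (ha : 0 ≤ a)
    (haa' : a ≤ a') (hb : 0 ≤ b) (hbb' : b ≤ b') :
    a' ^ n - b ^ n = a ^ n - b' ^ n ↔ a' = a ∧ b = b' := by
  have hpow_a : a ^ n ≤ a' ^ n := pow_le_pow_left₀ ha haa' n
  have hpow_b : b ^ n ≤ b' ^ n := pow_le_pow_left₀ hb hbb' n
  rw [← pow_left_inj₀ (ha.trans haa') ha hn, ← pow_left_inj₀ hb (hb.trans hbb') hn]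
  constructor
  · intro h
    constructor <;> linarith
  · rintro ⟨h, h'⟩
    rw [h, h']

lemma pow_add_pow_le_pow_of_sq_add_sq_eq {p q s : ℝ} {n : ℕ} (hn : 2 ≤ n) (hp : 0 ≤ p)
    (hq : 0 ≤ q) (hs : 0 ≤ s) (h : p ^ 2 + q ^ 2 = s ^ 2) : p ^ n + q ^ n ≤ s ^ n := by
  obtain ⟨m, rfl⟩ := Nat.exists_eq_add_of_le hn
  have hps : p ≤ s := abs_le_of_sq_le_sq' (by nlinarith [sq_nonneg q]) hs |>.2
  have hqs : q ≤ s := abs_le_of_sq_le_sq' (by nlinarith [sq_nonneg p]) hs |>.2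
  rw [pow_add, pow_add, pow_add, ← h, add_mul]
  gcongr

lemma pow_add_pow_eq_pow_iff_of_sq_add_sq_eq {p q s : ℝ} {n : ℕ} (hn : 2 ≤ n) (hp : 0 < p)
    (hq : 0 ≤ q) (hs : 0 ≤ s) (h : p ^ 2 + q ^ 2 = s ^ 2) :
    p ^ n + q ^ n = s ^ n ↔ n = 2 ∨ q = 0 := by
  constructor
  · intro hpow
    by_contra! hcon
    have hq' : 0 < q := hq.lt_of_ne' hcon.2
    have hqs : q < s := lt_of_pow_lt_pow_left₀ 2 hs (by nlinarith [pow_pos hp 2])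
    have hps : p < s := lt_of_pow_lt_pow_left₀ 2 hs (by nlinarith [pow_pos hq' 2])
    obtain ⟨m, rfl⟩ := Nat.exists_eq_add_of_le hn
    have hm : m ≠ 0 := by omega
    refine hpow.not_lt ?_
    rw [pow_add, pow_add, pow_add, ← h, add_mul]
    gcongr
  · rintro (rfl | rfl)
    · exact h
    · have hps : p = s := by
        rwa [zero_pow two_ne_zero, add_zero, pow_left_inj₀ hp.le hs two_ne_zero] at h
      rw [hps, zero_pow (by omega), add_zero]

lemma sq_two_mul_sqrt_mul_add_sq_abs_sub {k t : ℝ} (hk : 0 ≤ k) (ht : 0 ≤ t) :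
    (2 * √(k * t)) ^ 2 + |k - t| ^ 2 = (k + t) ^ 2 := by
  rw [mul_pow, Real.sq_sqrt (mul_nonneg hk ht), sq_abs]
  ring

lemma inv_two_pow_mul_eq_sqrt_pow_mul_pow_iff {k t v : ℝ} (hk : 0 ≤ k) (ht : 0 ≤ t) (n : ℕ) :
    2⁻¹ ^ n * v = √(k ^ n * t ^ n) ↔ v = (2 * √(k * t)) ^ n := by
  have hsqrt : √((k * t) ^ n) = √(k * t) ^ n := by
    rw [Real.sqrt_eq_iff_mul_self_eq (by positivity) (by positivity), ← mul_pow,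
      Real.mul_self_sqrt (mul_nonneg hk ht)]
  rw [← mul_pow k, hsqrt, mul_pow 2, inv_pow, inv_mul_eq_iff_eq_mul₀ (by positivity)]

end PowerSums

section BoundarySum

variable {E : Type*} [NormedAddCommGroup E] [NormedSpace ℝ E] [MeasurableSpace E] [BorelSpace E]
  [FiniteDimensional ℝ E] {μ : Measure E} [μ.IsAddHaarMeasure] {K T : Set E}

theorem pow_sub_pow_le_measureReal_frontier_add_frontier (hE : 1 < finrank ℝ E)
    (hK : IsConvexBody K) (hT : IsConvexBody T) :
    (volumeRadius μ K + volumeRadius μ T) ^ finrank ℝ E -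
        |volumeRadius μ K - volumeRadius μ T| ^ finrank ℝ E ≤
      μ.real (frontier K + frontier T) := by
  have : Nontrivial E := nontrivial_of_finrank_pos (zero_lt_one.trans hE)
  wlog hTK : volumeRadius μ T ≤ volumeRadius μ K generalizing K T
  · simpa only [add_comm, abs_sub_comm] using this hT hK (not_le.1 hTK).le
  have hadd := volumeRadius_add_le (μ := μ) hK.isCompact hT.isCompact hK.nonempty hT.nonempty
  have hdiff := volumeRadius_minkowskiDiff_le (μ := μ) hK.isCompact hT.neg.isCompact
    hT.neg.nonempty (by rwa [volumeRadius_neg])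
  rw [volumeRadius_neg] at hdiff
  rw [abs_of_nonneg (sub_nonneg.2 hTK),
    eq_sub_of_add_eq (measureReal_frontier_add_frontier_add hE hK hT hTK),
    ← volumeRadius_pow μ (K + T), ← volumeRadius_pow μ (minkowskiDiff K (-T))]
  have := volumeRadius_nonneg μ K
  have := volumeRadius_nonneg μ T
  have := volumeRadius_nonneg μ (minkowskiDiff K (-T))
  gcongr

theorem measureReal_frontier_add_frontier_eq_iff (hE : 1 < finrank ℝ E)
    (hK : IsConvexBody K) (hT : IsConvexBody T) :
    μ.real (frontier K + frontier T) =
        (volumeRadius μ K + volumeRadius μ T) ^ finrank ℝ E -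
          |volumeRadius μ K - volumeRadius μ T| ^ finrank ℝ E ↔
      Homothetic K T ∧ (volumeRadius μ K = volumeRadius μ T ∨ Homothetic K (-T)) := by
  have : Nontrivial E := nontrivial_of_finrank_pos (zero_lt_one.trans hE)
  wlog hTK : volumeRadius μ T ≤ volumeRadius μ K generalizing K T
  · have hswap (A B : Set E) (h : Homothetic A (-B)) : Homothetic B (-A) := by
      simpa only [neg_neg] using h.neg.symm
    rw [add_comm (frontier K), add_comm (volumeRadius μ K), abs_sub_comm]
    exact (this hT hK (not_le.1 hTK).le).trans
      (and_congr ⟨.symm, .symm⟩ (or_congr eq_comm ⟨hswap T K, hswap K T⟩))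
  have hadd := volumeRadius_add_le (μ := μ) hK.isCompact hT.isCompact hK.nonempty hT.nonempty
  have hTK' : volumeRadius μ (-T) ≤ volumeRadius μ K := by rwa [volumeRadius_neg]
  have hdiff := volumeRadius_minkowskiDiff_le (μ := μ) hK.isCompact hT.neg.isCompact
    hT.neg.nonempty hTK'
  have hdiff_eq := volumeRadius_minkowskiDiff_eq_iff (μ := μ) hK hT.neg hTK'
  rw [volumeRadius_neg] at hdiff hdiff_eq
  rw [abs_of_nonneg (sub_nonneg.2 hTK),
    eq_sub_of_add_eq (measureReal_frontier_add_frontier_add hE hK hT hTK),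
    ← volumeRadius_pow μ (K + T), ← volumeRadius_pow μ (minkowskiDiff K (-T)),
    ← hK.volumeRadius_add_eq_iff (μ := μ) hT, ← hdiff_eq]
  exact pow_sub_pow_eq_pow_sub_pow_iff finrank_pos.ne'
    (add_nonneg (volumeRadius_nonneg μ K) (volumeRadius_nonneg μ T)) hadd
    (volumeRadius_nonneg μ _) hdiff

lemma IsConvexBody.exists_neg_eq_vadd_iff [Nontrivial E] (μ : Measure E) [μ.IsAddHaarMeasure]
    (hK : IsConvexBody K) (hKT : Homothetic K T) : (∃ y : E, -K = y +ᵥ K) ↔ Homothetic K (-T) := by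
  rw [Homothetic.exists_eq_vadd_iff (μ := μ) hK, volumeRadius_neg, and_iff_left rfl]
  exact ⟨(·.trans hKT.neg), (·.trans hKT.symm.neg)⟩

theorem boundary_sum_average_equality_cases_general (hE : 2 ≤ finrank ℝ E) (hK : IsConvexBody K)
    (hT : IsConvexBody T) :
    μ.real ((2 : ℝ)⁻¹ • (frontier K + frontier T)) = √(μ.real K * μ.real T) ↔
      (∃ x : E, T = x +ᵥ K) ∨
        (finrank ℝ E = 2 ∧ Homothetic K T ∧ ∃ y : E, -K = y +ᵥ K) := by
  have : Nontrivial E := nontrivial_of_finrank_pos (two_pos.trans_le hE)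
  have hk := hK.volumeRadius_pos μ
  have ht := hT.volumeRadius_pos μ
  have hpyth := sq_two_mul_sqrt_mul_add_sq_abs_sub hk.le ht.le
  have hgeom := pow_sub_pow_le_measureReal_frontier_add_frontier (μ := μ) hE hK hT
  have hnum := pow_add_pow_le_pow_of_sq_add_sq_eq hE (by positivity) (abs_nonneg _)
    (by positivity) hpyth
  have hgeom_eq := measureReal_frontier_add_frontier_eq_iff (μ := μ) hE hK hT
  have hnum_eq := pow_add_pow_eq_pow_iff_of_sq_add_sq_eq hE (by positivity) (abs_nonneg _)
    (by positivity) hpyth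
  rw [abs_eq_zero, sub_eq_zero] at hnum_eq
  rw [addHaar_real_smul, abs_of_pos (by positivity), ← volumeRadius_pow μ K,
    ← volumeRadius_pow μ T, inv_two_pow_mul_eq_sqrt_pow_mul_pow_iff hk.le ht.le,
    Homothetic.exists_eq_vadd_iff (μ := μ) hK]
  trans (finrank ℝ E = 2 ∨ volumeRadius μ K = volumeRadius μ T) ∧
    Homothetic K T ∧ (volumeRadius μ K = volumeRadius μ T ∨ Homothetic K (-T))
  · rw [← hnum_eq, ← hgeom_eq]
    constructor
    · intro h
      constructor <;> linarith
    · rintro ⟨h, h'⟩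
      linarith
  · by_cases hKT : Homothetic K T
    · rw [hK.exists_neg_eq_vadd_iff μ hKT]
      tauto
    · tauto

end BoundarySum

theorem boundary_sum_average_equality_cases (n : ℕ) (hn : 2 ≤ n)
    (K T : Set (EuclideanSpace ℝ (Fin n)))
    (hK : IsCompact K) (hKconv : Convex ℝ K) (hKint : (interior K).Nonempty)
    (hT : IsCompact T) (hTconv : Convex ℝ T) (hTint : (interior T).Nonempty) :
    (volume ((2:ℝ)⁻¹ • (frontier K + frontier T))).toReal =
      Real.sqrt ((volume K).toReal * (volume T).toReal) ↔
    ((∃ x : EuclideanSpace ℝ (Fin n), T = x +ᵥ K) ∨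
      (n = 2 ∧ (∃ x : EuclideanSpace ℝ (Fin n), ∃ r : ℝ, 0 < r ∧ T = x +ᵥ r • K) ∧
        (∃ y : EuclideanSpace ℝ (Fin n), -K = y +ᵥ K))) := by
  simpa only [finrank_euclideanSpace_fin, measureReal_def, Homothetic] using
    boundary_sum_average_equality_cases_general (μ := volume)
      (hn.trans_eq finrank_euclideanSpace_fin.symm) ⟨hK, hKconv, hKint⟩ ⟨hT, hTconv, hTint⟩
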